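/- arXiv:math/0703332 — 3 statements merged into one kernel-verified Lean document; each statement's English description precedes it below -/
import Mathlib

section
/- Let D be a symmetric 2n×2n real matrix, let ρ, μ ∈ ℝ be such that the operator norm of D is at most ρ and XᵀDX ≥ μ‖X‖² for all X (i.e., ρ bounds the absolute values of the eigenvalues of D and μ is a lower bound for its eigenvalues), let H, A be 2n×2n real matrices and κ ≥ 0 with ‖A‖ ≤ κ (operator norm). Then for every X ∈ ℝ^{2n}: Q(J_st + H, D, A, X) ≥ Q(J_st, D, 0, X) − 2ρ‖H‖·‖X‖² + μ‖HX‖² − 2κ(1 + ‖H‖)·‖X‖². -/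
open Matrix

/-- The Euclidean norm of a real vector. -/
noncomputable def evnorm {m : Type*} [Fintype m] (x : m → ℝ) : ℝ :=
  Real.sqrt (∑ i, x i ^ 2)

/-- The operator norm of a real matrix with respect to the Euclidean norm. -/
noncomputable def opnorm {m : Type*} [Fintype m] [DecidableEq m]
    (M : Matrix m m ℝ) : ℝ :=
  ‖Matrix.toEuclideanCLM (𝕜 := ℝ) M‖

/-- The coordinate expression of the Levi form:
`Q(J,D,A,X) = XᵀDX + (JX)ᵀD(JX) + Xᵀ(A − Aᵀ)(JX)`. -/
noncomputable def LeviQ {m : Type*} [Fintype m] (J D A : Matrix m m ℝ) (X : m → ℝ) : ℝ :=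
  X ⬝ᵥ D.mulVec X + (J.mulVec X) ⬝ᵥ D.mulVec (J.mulVec X)
    + X ⬝ᵥ ((A - Aᵀ).mulVec (J.mulVec X))

/-- The standard complex structure `J_st = [[0, −Iₙ],[Iₙ, 0]]` on `ℝ^{2n} = ℝⁿ ⊕ ℝⁿ`. -/
def Jstd (n : ℕ) : Matrix (Fin n ⊕ Fin n) (Fin n ⊕ Fin n) ℝ :=
  Matrix.fromBlocks 0 (-1) 1 0

/-! Write `Y = J X` and `Z = H X`, so that the Levi form of `J + H` sees `Y + Z` instead of `Y`. In
the expansion of `(Y + Z)ᵀD(Y + Z)` the two cross terms are at least `-ρ‖Y‖‖Z‖` each by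
Cauchy–Schwarz, and `ZᵀDZ ≥ μ‖Z‖²` is kept as it stands instead of being absorbed into the error.
The first-order term is at most `2κ‖X‖‖Y + Z‖` in absolute value, and `‖Y‖ = ‖X‖` for
`J = J_st`. -/

section Euclidean

variable {m : Type*} [Fintype m]

theorem evnorm_eq_norm_toLp (x : m → ℝ) : evnorm x = ‖WithLp.toLp 2 x‖ := by
  simp only [evnorm, EuclideanSpace.norm_eq, Real.norm_eq_abs, sq_abs]

theorem evnorm_nonneg (x : m → ℝ) : 0 ≤ evnorm x :=
  Real.sqrt_nonneg _

variable [DecidableEq m] {M : Matrix m m ℝ} {c : ℝ}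

theorem opnorm_add_le (M N : Matrix m m ℝ) : opnorm (M + N) ≤ opnorm M + opnorm N := by
  simpa only [opnorm, map_add] using
    norm_add_le (toEuclideanCLM (𝕜 := ℝ) M) (toEuclideanCLM (𝕜 := ℝ) N)

theorem evnorm_mulVec_le_of_opnorm_le (hM : opnorm M ≤ c) (x : m → ℝ) :
    evnorm (M *ᵥ x) ≤ c * evnorm x := by
  simpa only [evnorm_eq_norm_toLp, toEuclideanCLM_toLp] using
    (toEuclideanCLM (𝕜 := ℝ) M).le_of_opNorm_le hM (WithLp.toLp 2 x)

theorem opnorm_le_of_evnorm_mulVec_le (hc : 0 ≤ c)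
    (hM : ∀ x, evnorm (M *ᵥ x) ≤ c * evnorm x) : opnorm M ≤ c :=
  ContinuousLinearMap.opNorm_le_bound _ hc fun x ↦ by
    simpa only [evnorm_eq_norm_toLp, ← toEuclideanCLM_toLp] using hM x.ofLp

theorem abs_dotProduct_mulVec_le_of_opnorm_le (hM : opnorm M ≤ c) (x y : m → ℝ) :
    |x ⬝ᵥ M *ᵥ y| ≤ c * (evnorm x * evnorm y) :=
  calc |x ⬝ᵥ M *ᵥ y|
      ≤ evnorm x * evnorm (M *ᵥ y) := by
        rw [evnorm_eq_norm_toLp, evnorm_eq_norm_toLp, ← toEuclideanCLM_toLp (𝕜 := ℝ)]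
        simpa only [inner_toEuclideanCLM] using
          abs_real_inner_le_norm (WithLp.toLp 2 x) (toEuclideanCLM (𝕜 := ℝ) M (WithLp.toLp 2 y))
    _ ≤ evnorm x * (c * evnorm y) :=
        mul_le_mul_of_nonneg_left (evnorm_mulVec_le_of_opnorm_le hM y) (evnorm_nonneg x)
    _ = c * (evnorm x * evnorm y) := mul_left_comm _ _ _

theorem abs_dotProduct_sub_transpose_mulVec_le_of_opnorm_le (hM : opnorm M ≤ c) (x y : m → ℝ) :
    |x ⬝ᵥ (M - Mᵀ) *ᵥ y| ≤ 2 * c * (evnorm x * evnorm y) :=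
  calc |x ⬝ᵥ (M - Mᵀ) *ᵥ y|
      = |x ⬝ᵥ M *ᵥ y - y ⬝ᵥ M *ᵥ x| := by
        rw [sub_mulVec, dotProduct_sub, dotProduct_transpose_mulVec]
    _ ≤ |x ⬝ᵥ M *ᵥ y| + |y ⬝ᵥ M *ᵥ x| := abs_sub _ _
    _ ≤ c * (evnorm x * evnorm y) + c * (evnorm y * evnorm x) :=
        add_le_add (abs_dotProduct_mulVec_le_of_opnorm_le hM x y)
          (abs_dotProduct_mulVec_le_of_opnorm_le hM y x)
    _ = 2 * c * (evnorm x * evnorm y) := by ring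

theorem sub_add_le_dotProduct_mulVec_add_of_opnorm_le (hM : opnorm M ≤ c) (y z : m → ℝ) :
    y ⬝ᵥ M *ᵥ y - 2 * c * (evnorm y * evnorm z) + z ⬝ᵥ M *ᵥ z ≤
      (y + z) ⬝ᵥ M *ᵥ (y + z) := by
  have expand : (y + z) ⬝ᵥ M *ᵥ (y + z) =
      y ⬝ᵥ M *ᵥ y + y ⬝ᵥ M *ᵥ z + z ⬝ᵥ M *ᵥ y + z ⬝ᵥ M *ᵥ z := by
    rw [mulVec_add, dotProduct_add, add_dotProduct, add_dotProduct]
    ring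
  have cross_yz := neg_le_of_abs_le (abs_dotProduct_mulVec_le_of_opnorm_le hM y z)
  have cross_zy := neg_le_of_abs_le (abs_dotProduct_mulVec_le_of_opnorm_le hM z y)
  linarith

end Euclidean

theorem LeviQ_zero {m : Type*} [Fintype m] (J D : Matrix m m ℝ) (X : m → ℝ) :
    LeviQ J D 0 X = X ⬝ᵥ D *ᵥ X + (J *ᵥ X) ⬝ᵥ D *ᵥ (J *ᵥ X) := by
  simp [LeviQ]

theorem evnorm_Jstd_mulVec (n : ℕ) (X : Fin n ⊕ Fin n → ℝ) :
    evnorm (Jstd n *ᵥ X) = evnorm X := by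
  simp [evnorm, Jstd, fromBlocks_mulVec, neg_mulVec, add_comm]

theorem opnorm_Jstd_le_one (n : ℕ) : opnorm (Jstd n) ≤ 1 :=
  opnorm_le_of_evnorm_mulVec_le zero_le_one fun X ↦ by rw [evnorm_Jstd_mulVec, one_mul]

theorem stmt9_general {m : Type*} [Fintype m] [DecidableEq m] {J D A : Matrix m m ℝ}
    {σ ρ μ κ : ℝ} (hJ : opnorm J ≤ σ) (hρ : opnorm D ≤ ρ)
    (hμ : ∀ X, μ * evnorm X ^ 2 ≤ X ⬝ᵥ D *ᵥ X) (hA : opnorm A ≤ κ)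
    (H : Matrix m m ℝ) (X : m → ℝ) :
    LeviQ J D 0 X - 2 * ρ * σ * opnorm H * evnorm X ^ 2
        + μ * evnorm (H *ᵥ X) ^ 2 - 2 * κ * (σ + opnorm H) * evnorm X ^ 2 ≤
      LeviQ (J + H) D A X := by
  have hX : 0 ≤ evnorm X := evnorm_nonneg X
  have hσ : 0 ≤ σ := (norm_nonneg _).trans hJ
  have hρ₀ : 0 ≤ ρ := (norm_nonneg _).trans hρ
  have hκ : 0 ≤ κ := (norm_nonneg _).trans hA
  have hJH : opnorm (J + H) ≤ σ + opnorm H := by grw [opnorm_add_le, hJ]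
  have cross : 2 * ρ * (evnorm (J *ᵥ X) * evnorm (H *ᵥ X)) ≤
      2 * ρ * σ * opnorm H * evnorm X ^ 2 :=
    calc 2 * ρ * (evnorm (J *ᵥ X) * evnorm (H *ᵥ X))
        ≤ 2 * ρ * (σ * evnorm X * (opnorm H * evnorm X)) := by
          gcongr
          · exact evnorm_nonneg _
          · exact evnorm_mulVec_le_of_opnorm_le hJ X
          · exact evnorm_mulVec_le_of_opnorm_le le_rfl X
      _ = 2 * ρ * σ * opnorm H * evnorm X ^ 2 := by ring
  have first_order : |X ⬝ᵥ (A - Aᵀ) *ᵥ ((J + H) *ᵥ X)| ≤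
      2 * κ * (σ + opnorm H) * evnorm X ^ 2 :=
    calc |X ⬝ᵥ (A - Aᵀ) *ᵥ ((J + H) *ᵥ X)|
        ≤ 2 * κ * (evnorm X * evnorm ((J + H) *ᵥ X)) :=
          abs_dotProduct_sub_transpose_mulVec_le_of_opnorm_le hA X _
      _ ≤ 2 * κ * (evnorm X * ((σ + opnorm H) * evnorm X)) := by
          gcongr
          exact evnorm_mulVec_le_of_opnorm_le hJH X
      _ = 2 * κ * (σ + opnorm H) * evnorm X ^ 2 := by ring
  have second_order := sub_add_le_dotProduct_mulVec_add_of_opnorm_le hρ (J *ᵥ X) (H *ᵥ X)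
  rw [← add_mulVec] at second_order
  rw [LeviQ_zero, LeviQ]
  linarith [hμ (H *ᵥ X), neg_le_of_abs_le first_order]

/-- If `D` is symmetric with operator norm at most `ρ` and
`XᵀDX ≥ μ‖X‖²` for all `X`, and `‖A‖ ≤ κ` with `κ ≥ 0`, then
`Q(J_st + H, D, A, X) ≥ Q(J_st, D, 0, X) − 2ρ‖H‖‖X‖² + μ‖HX‖² − 2κ(1 + ‖H‖)‖X‖²`. -/
theorem stmt9 {n : ℕ} (D H A : Matrix (Fin n ⊕ Fin n) (Fin n ⊕ Fin n) ℝ)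
    (hD : D.IsSymm) (ρ μ κ : ℝ)
    (hρ : opnorm D ≤ ρ)
    (hμ : ∀ X : Fin n ⊕ Fin n → ℝ, μ * evnorm X ^ 2 ≤ X ⬝ᵥ D.mulVec X)
    (hκ : 0 ≤ κ) (hA : opnorm A ≤ κ) (X : Fin n ⊕ Fin n → ℝ) :
    LeviQ (Jstd n + H) D A X ≥
      LeviQ (Jstd n) D 0 X - 2 * ρ * opnorm H * evnorm X ^ 2
        + μ * evnorm (H.mulVec X) ^ 2 - 2 * κ * (1 + opnorm H) * evnorm X ^ 2 := by
  simpa only [mul_one] using stmt9_general (opnorm_Jstd_le_one n) hρ hμ hA H X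
end

section
/- Let n ≥ 1, let m > 0 and set ε_m = min(1/(32(1+m)), 1/(32·m·(1+m))). Let H : ℝ^{2n} → M_{2n}(ℝ) be a differentiable matrix-valued map, and let x, p ∈ ℝ^{2n} with ‖x‖ ≤ m and ‖p‖ ≤ m. Assume the C¹-bound ‖H(x)‖ + (Σ_{i=1}^{2n} ‖(∂H_{i,j}/∂x_k(x))_{j,k}‖²)^{1/2} ≤ ε_m (all matrix norms being operator norms). Let A(x) be the 2n×2n matrix with entries A(x)_{j,k} = Σ_{i=1}^{2n} 2(x_i − p_i)·∂H_{i,j}/∂x_k(x). Then for every X ∈ ℝ^{2n}: (7/2)·‖X‖² ≤ Q(J_st + H(x), 2·I_{2n}, A(x), X) ≤ (9/2)·‖X‖². (This is the two-sided bound on the Levi form of u = ‖·−p‖² with respect to J = J_st + H on a domain bounded by m.) -/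
open Matrix

/-!
An isometric `J₀` gives `Q(J₀, 2I, 0, X) = 4‖X‖²`. Replacing `J₀` by `J₀ + E` changes the length of
`J₀X` by at most `‖E‖‖X‖`, and the term in `A` is at most `2‖A‖‖X‖‖(J₀ + E)X‖`, so `Q` moves by at
most `(2‖E‖(2 + ‖E‖) + 2‖A‖(1 + ‖E‖))‖X‖²`. For `A = ∑ᵢ 2cᵢBᵢ` the triangle inequality and
Cauchy–Schwarz give `‖A‖ ≤ 2‖c‖(∑ᵢ ‖Bᵢ‖²)^{1/2}`. Under the bound `ε_m` this makes `‖E‖ ≤ 1/32` and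
`‖A‖ ≤ 1/8`, and then the coefficient of `‖X‖²` is `197/512 < 1/2`.
-/

section Norms

open scoped Matrix.Norms.L2Operator

variable {ι κ : Type*} [Fintype ι] [Fintype κ]

lemma evnorm_eq_norm_toLp_s12 (v : ι → ℝ) : evnorm v = ‖WithLp.toLp 2 v‖ := by
  simp [evnorm, EuclideanSpace.norm_eq]

lemma evnorm_nonneg_s12 (v : ι → ℝ) : 0 ≤ evnorm v :=
  Real.sqrt_nonneg _

lemma evnorm_sub_le (v w : ι → ℝ) : evnorm (v - w) ≤ evnorm v + evnorm w := by
  simpa only [evnorm_eq_norm_toLp_s12, WithLp.toLp_sub] using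
    norm_sub_le (WithLp.toLp 2 v) (WithLp.toLp 2 w)

lemma evnorm_smul (r : ℝ) (v : ι → ℝ) : evnorm (r • v) = |r| * evnorm v := by
  simpa only [evnorm_eq_norm_toLp_s12, WithLp.toLp_smul, Real.norm_eq_abs] using
    norm_smul r (WithLp.toLp 2 v)

lemma abs_evnorm_sub_evnorm_le (v w : ι → ℝ) : |evnorm v - evnorm w| ≤ evnorm (v - w) := by
  simpa only [evnorm_eq_norm_toLp_s12, WithLp.toLp_sub] using
    abs_norm_sub_norm_le (WithLp.toLp 2 v) (WithLp.toLp 2 w)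

lemma evnorm_sq (v : ι → ℝ) : evnorm v ^ 2 = v ⬝ᵥ v := by
  rw [evnorm_eq_norm_toLp_s12, EuclideanSpace.real_norm_sq_eq]
  simp only [dotProduct, sq]

lemma abs_dotProduct_le_evnorm_mul_evnorm (v w : ι → ℝ) : |v ⬝ᵥ w| ≤ evnorm v * evnorm w := by
  simpa [evnorm_eq_norm_toLp_s12, EuclideanSpace.inner_eq_star_dotProduct, mul_comm] using
    abs_real_inner_le_norm (WithLp.toLp 2 w) (WithLp.toLp 2 v)

variable [DecidableEq ι]

lemma opnorm_eq_norm (M : Matrix ι ι ℝ) : opnorm M = ‖M‖ :=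
  rfl

lemma opnorm_nonneg (M : Matrix ι ι ℝ) : 0 ≤ opnorm M :=
  norm_nonneg _

lemma evnorm_mulVec_le (M : Matrix ι ι ℝ) (v : ι → ℝ) :
    evnorm (M *ᵥ v) ≤ opnorm M * evnorm v := by
  simp only [evnorm_eq_norm_toLp_s12, opnorm_eq_norm]
  exact l2_opNorm_mulVec M (WithLp.toLp 2 v)

lemma opnorm_sub_transpose_le (M : Matrix ι ι ℝ) : opnorm (M - Mᵀ) ≤ 2 * opnorm M := by
  have htranspose : ‖Mᵀ‖ = ‖M‖ := by
    rw [← conjTranspose_eq_transpose_of_trivial, l2_opNorm_conjTranspose]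
  have := norm_sub_le M Mᵀ
  simp only [opnorm_eq_norm]
  linarith

lemma opnorm_sum_smul_le (a : κ → ℝ) (B : κ → Matrix ι ι ℝ) :
    opnorm (∑ i, a i • B i) ≤ evnorm a * √(∑ i, opnorm (B i) ^ 2) :=
  calc opnorm (∑ i, a i • B i) = ‖∑ i, a i • B i‖ := opnorm_eq_norm _
    _ ≤ ∑ i, ‖a i • B i‖ := norm_sum_le _ _
    _ = ∑ i, |a i| * opnorm (B i) := by simp only [norm_smul, Real.norm_eq_abs, opnorm_eq_norm]
    _ ≤ √(∑ i, |a i| ^ 2) * √(∑ i, opnorm (B i) ^ 2) := Real.sum_mul_le_sqrt_mul_sqrt _ _ _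
    _ = evnorm a * √(∑ i, opnorm (B i) ^ 2) := by simp only [sq_abs, evnorm]

lemma abs_dotProduct_mulVec_le (M : Matrix ι ι ℝ) (v w : ι → ℝ) :
    |v ⬝ᵥ M *ᵥ w| ≤ opnorm M * (evnorm v * evnorm w) :=
  calc |v ⬝ᵥ M *ᵥ w| ≤ evnorm v * evnorm (M *ᵥ w) := abs_dotProduct_le_evnorm_mul_evnorm _ _
    _ ≤ evnorm v * (opnorm M * evnorm w) := by
      gcongr
      · exact evnorm_nonneg_s12 v
      · exact evnorm_mulVec_le M w
    _ = opnorm M * (evnorm v * evnorm w) := by ring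

lemma evnorm_mulVec_of_mem_orthogonalGroup {J : Matrix ι ι ℝ} (hJ : J ∈ orthogonalGroup ι ℝ)
    (v : ι → ℝ) : evnorm (J *ᵥ v) = evnorm v := by
  have hJJ : Jᵀ * J = 1 := (mem_orthogonalGroup_iff' ι ℝ).mp hJ
  rw [← sq_eq_sq₀ (evnorm_nonneg_s12 _) (evnorm_nonneg_s12 _), evnorm_sq, evnorm_sq, dotProduct_mulVec,
    ← mulVec_transpose, mulVec_mulVec, hJJ, one_mulVec]

end Norms

lemma jstd_mem_orthogonalGroup (n : ℕ) : Jstd n ∈ orthogonalGroup (Fin n ⊕ Fin n) ℝ := by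
  rw [mem_orthogonalGroup_iff, Jstd]
  simp [fromBlocks_transpose, fromBlocks_multiply]

lemma le_and_mul_le_of_add_le_min {m h s : ℝ} (hm : 0 < m) (hh : 0 ≤ h) (hs : 0 ≤ s)
    (hbound : h + s ≤ min (1 / (32 * (1 + m))) (1 / (32 * m * (1 + m)))) :
    h ≤ 1 / 32 ∧ m * s ≤ 1 / 32 := by
  obtain ⟨hleft, hright⟩ := le_min_iff.mp hbound
  constructor
  · calc h ≤ 1 / (32 * (1 + m)) := by linarith
      _ ≤ 1 / 32 := one_div_le_one_div_of_le (by norm_num) (by linarith)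
  · calc m * s ≤ m * (1 / (32 * m * (1 + m))) := by
          gcongr
          linarith
      _ = 1 / (32 * (1 + m)) := by field_simp
      _ ≤ 1 / 32 := one_div_le_one_div_of_le (by norm_num) (by linarith)

section Levi

variable {ι κ : Type*} [Fintype ι] [DecidableEq ι] [Fintype κ]

lemma leviQ_smul_one (J A : Matrix ι ι ℝ) (r : ℝ) (X : ι → ℝ) :
    LeviQ J (r • 1) A X =
      r * (evnorm X ^ 2 + evnorm (J *ᵥ X) ^ 2) + X ⬝ᵥ (A - Aᵀ) *ᵥ (J *ᵥ X) := by
  simp only [LeviQ, smul_mulVec, one_mulVec, dotProduct_smul, smul_eq_mul, evnorm_sq, mul_add]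

lemma abs_evnorm_add_mulVec_sub_le {J₀ : Matrix ι ι ℝ} (hJ₀ : J₀ ∈ orthogonalGroup ι ℝ)
    (E : Matrix ι ι ℝ) (X : ι → ℝ) :
    |evnorm ((J₀ + E) *ᵥ X) - evnorm X| ≤ opnorm E * evnorm X := by
  have h := abs_evnorm_sub_evnorm_le ((J₀ + E) *ᵥ X) (J₀ *ᵥ X)
  rw [← sub_mulVec, add_sub_cancel_left, evnorm_mulVec_of_mem_orthogonalGroup hJ₀] at h
  exact h.trans (evnorm_mulVec_le E X)

lemma abs_leviQ_add_smul_one_sub_le {J₀ : Matrix ι ι ℝ} (hJ₀ : J₀ ∈ orthogonalGroup ι ℝ)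
    (E A : Matrix ι ι ℝ) (r : ℝ) (X : ι → ℝ) :
    |LeviQ (J₀ + E) (r • 1) A X - 2 * r * evnorm X ^ 2| ≤
      (|r| * (opnorm E * (2 + opnorm E)) + 2 * opnorm A * (1 + opnorm E)) * evnorm X ^ 2 := by
  set N := evnorm X with hN_def
  set y := evnorm ((J₀ + E) *ᵥ X) with hy_def
  have hN : 0 ≤ N := evnorm_nonneg_s12 X
  have hy : 0 ≤ y := evnorm_nonneg_s12 _
  have hE : 0 ≤ opnorm E := opnorm_nonneg E
  have hA : 0 ≤ opnorm A := opnorm_nonneg A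
  have hyN : |y - N| ≤ opnorm E * N := abs_evnorm_add_mulVec_sub_le hJ₀ E X
  have hy_le : y ≤ (1 + opnorm E) * N := by linarith [le_of_abs_le hyN]
  have hsq : |y ^ 2 - N ^ 2| ≤ opnorm E * (2 + opnorm E) * N ^ 2 :=
    calc |y ^ 2 - N ^ 2| = |y - N| * (y + N) := by
          rw [← abs_of_nonneg (add_nonneg hy hN), ← abs_mul]
          ring_nf
      _ ≤ opnorm E * N * ((1 + opnorm E) * N + N) := by gcongr
      _ = opnorm E * (2 + opnorm E) * N ^ 2 := by ring
  have hskew : |X ⬝ᵥ (A - Aᵀ) *ᵥ ((J₀ + E) *ᵥ X)| ≤ 2 * opnorm A * (1 + opnorm E) * N ^ 2 :=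
    calc |X ⬝ᵥ (A - Aᵀ) *ᵥ ((J₀ + E) *ᵥ X)| ≤ opnorm (A - Aᵀ) * (N * y) :=
          abs_dotProduct_mulVec_le _ _ _
      _ ≤ 2 * opnorm A * (N * ((1 + opnorm E) * N)) := by
          gcongr
          exact opnorm_sub_transpose_le A
      _ = 2 * opnorm A * (1 + opnorm E) * N ^ 2 := by ring
  calc |LeviQ (J₀ + E) (r • 1) A X - 2 * r * N ^ 2|
      = |r * (y ^ 2 - N ^ 2) + X ⬝ᵥ (A - Aᵀ) *ᵥ ((J₀ + E) *ᵥ X)| := by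
        rw [leviQ_smul_one, ← hN_def, ← hy_def]
        ring_nf
    _ ≤ |r| * |y ^ 2 - N ^ 2| + |X ⬝ᵥ (A - Aᵀ) *ᵥ ((J₀ + E) *ᵥ X)| := by
        rw [← abs_mul]
        exact abs_add_le _ _
    _ ≤ |r| * (opnorm E * (2 + opnorm E) * N ^ 2) + 2 * opnorm A * (1 + opnorm E) * N ^ 2 := by
        gcongr
    _ = (|r| * (opnorm E * (2 + opnorm E)) + 2 * opnorm A * (1 + opnorm E)) * N ^ 2 := by ring

lemma le_leviQ_add_and_leviQ_add_le {J₀ E A : Matrix ι ι ℝ} (hJ₀ : J₀ ∈ orthogonalGroup ι ℝ)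
    (hE : opnorm E ≤ 1 / 32) (hA : opnorm A ≤ 1 / 8) (X : ι → ℝ) :
    7 / 2 * evnorm X ^ 2 ≤ LeviQ (J₀ + E) ((2 : ℝ) • 1) A X ∧
      LeviQ (J₀ + E) ((2 : ℝ) • 1) A X ≤ 9 / 2 * evnorm X ^ 2 := by
  have hE₀ := opnorm_nonneg E
  have hcoeff : |2| * (opnorm E * (2 + opnorm E)) + 2 * opnorm A * (1 + opnorm E) ≤ 1 / 2 :=
    calc |2| * (opnorm E * (2 + opnorm E)) + 2 * opnorm A * (1 + opnorm E)
        ≤ |2| * (1 / 32 * (2 + 1 / 32)) + 2 * (1 / 8) * (1 + 1 / 32) := by gcongr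
      _ ≤ 1 / 2 := by norm_num
  have h := (abs_leviQ_add_smul_one_sub_le hJ₀ E A 2 X).trans
    (mul_le_mul_of_nonneg_right hcoeff (sq_nonneg _))
  rw [abs_le] at h
  constructor <;> linarith [h.1, h.2]

theorem stmt12_general {m : ℝ} (hm : 0 < m) {J₀ E : Matrix ι ι ℝ}
    (hJ₀ : J₀ ∈ orthogonalGroup ι ℝ) {B : κ → Matrix ι ι ℝ} {c : κ → ℝ} (hc : evnorm c ≤ 2 * m)
    (hbound : opnorm E + √(∑ i, opnorm (B i) ^ 2) ≤
      min (1 / (32 * (1 + m))) (1 / (32 * m * (1 + m))))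
    (X : ι → ℝ) :
    7 / 2 * evnorm X ^ 2 ≤
        LeviQ (J₀ + E) ((2 : ℝ) • 1) (of fun j k => ∑ i, 2 * c i * B i j k) X ∧
      LeviQ (J₀ + E) ((2 : ℝ) • 1) (of fun j k => ∑ i, 2 * c i * B i j k) X ≤
        9 / 2 * evnorm X ^ 2 := by
  obtain ⟨hE, hmB⟩ := le_and_mul_le_of_add_le_min hm (opnorm_nonneg E) (Real.sqrt_nonneg _) hbound
  have hA_eq : (of fun j k => ∑ i, 2 * c i * B i j k) = ∑ i, ((2 : ℝ) • c) i • B i := by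
    ext j k
    simp only [of_apply, Matrix.sum_apply, Matrix.smul_apply, Pi.smul_apply, smul_eq_mul]
  have hA : opnorm (of fun j k => ∑ i, 2 * c i * B i j k) ≤ 1 / 8 :=
    calc opnorm (of fun j k => ∑ i, 2 * c i * B i j k)
        ≤ evnorm ((2 : ℝ) • c) * √(∑ i, opnorm (B i) ^ 2) := hA_eq ▸ opnorm_sum_smul_le _ _
      _ = 2 * evnorm c * √(∑ i, opnorm (B i) ^ 2) := by rw [evnorm_smul, abs_two]
      _ ≤ 2 * (2 * m) * √(∑ i, opnorm (B i) ^ 2) := by gcongr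
      _ ≤ 1 / 8 := by linarith
  exact le_leviQ_add_and_leviQ_add_le hJ₀ hE hA X

end Levi

/-- Let `m > 0`, `ε_m = min(1/(32(1+m)), 1/(32m(1+m)))`, and let
`H : ℝ^{2n} → M_{2n}(ℝ)` be differentiable with C¹-bound
`‖H(x)‖ + (Σᵢ ‖(∂H_{i,j}/∂x_k(x))_{j,k}‖²)^{1/2} ≤ ε_m` at a point `x` with
`‖x‖, ‖p‖ ≤ m`. With `A(x)_{j,k} = Σᵢ 2(xᵢ − pᵢ)·∂H_{i,j}/∂x_k(x)` (the Levi data of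
`u = ‖·−p‖²`, whose Hessian is `2I`), one has
`(7/2)‖X‖² ≤ Q(J_st + H(x), 2I, A(x), X) ≤ (9/2)‖X‖²`. -/
theorem stmt12 {n : ℕ} (hn : 1 ≤ n) (m : ℝ) (hm : 0 < m)
    (H : ((Fin n ⊕ Fin n) → ℝ) → Matrix (Fin n ⊕ Fin n) (Fin n ⊕ Fin n) ℝ)
    (x p : (Fin n ⊕ Fin n) → ℝ)
    (hdiff : ∀ i j, DifferentiableAt ℝ (fun y => H y i j) x)
    (hx : evnorm x ≤ m) (hp : evnorm p ≤ m)
    (hbound : opnorm (H x)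
        + Real.sqrt (∑ i, opnorm (Matrix.of fun j k =>
            fderiv ℝ (fun y => H y i j) x (Pi.single k 1)) ^ 2)
      ≤ min (1 / (32 * (1 + m))) (1 / (32 * m * (1 + m))))
    (X : (Fin n ⊕ Fin n) → ℝ) :
    (7 / 2) * evnorm X ^ 2 ≤
        LeviQ (Jstd n + H x) ((2 : ℝ) • (1 : Matrix (Fin n ⊕ Fin n) (Fin n ⊕ Fin n) ℝ))
          (Matrix.of fun j k => ∑ i, 2 * (x i - p i)
            * fderiv ℝ (fun y => H y i j) x (Pi.single k 1)) X ∧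
      LeviQ (Jstd n + H x) ((2 : ℝ) • (1 : Matrix (Fin n ⊕ Fin n) (Fin n ⊕ Fin n) ℝ))
          (Matrix.of fun j k => ∑ i, 2 * (x i - p i)
            * fderiv ℝ (fun y => H y i j) x (Pi.single k 1)) X
        ≤ (9 / 2) * evnorm X ^ 2 := by
  have hxp : evnorm (x - p) ≤ 2 * m := by linarith [evnorm_sub_le x p]
  exact stmt12_general hm (jstd_mem_orthogonalGroup n) hxp hbound X
end

section
/- Let n ≥ 1 and let r_1, …, r_n : ℝ^{2n} → ℝ be C² functions, and p ∈ ℝ^{2n} with r_i(p) = 0 for all i. Let J be a real 2n×2n matrix with J² = −I_{2n}, and assume the totally real condition: the only X ∈ ℝ^{2n} satisfying d(r_i)_p(X) = 0 and d(r_i)_p(J·X) = 0 for all i = 1, …, n is X = 0. Set ρ = Σ_{i=1}^n r_i². Then: (a) ∇ρ(p) = 0; (b) the Hessian matrix D of ρ at p satisfies XᵀDX + (JX)ᵀD(JX) = 2·Σ_{i=1}^n [ (d(r_i)_p(X))² + (d(r_i)_p(JX))² ] for all X ∈ ℝ^{2n}; and (c) the quadratic form X ↦ XᵀDX + (JX)ᵀD(JX)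 is positive definite. (This is the Levi form at p of the function ρ = Σ r_i² with respect to J, showing that a maximal totally real submanifold {r_1 = … = r_n = 0} is the zero set of a nonnegative strictly J-plurisubharmonic function.) -/
open Matrix

/-! The derivative of `ρ = ∑ i, r i ^ 2` is `2 ∑ i, r i • d(r i)`. At a common zero `p` of the
`r i`, the first-order variation of `r i • d(r i)` is `d(r i) ⊗ d(r i)`: the variation of `d(r i)`
is multiplied by `r i y = O(y - p)`, so by continuity of `d(r i)` it contributes only `o(y - p)`.
Hence the Hessian of `ρ` at `p` is `2 ∑ i, d(r i) ⊗ d(r i)`, and the Levi form is twice the sum of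
the squares of all `d(r i) X` and `d(r i) (J X)`. -/

theorem sum_sq_add_sq_eq_zero_iff {ι R : Type*} [Fintype ι] [Ring R] [LinearOrder R]
    [IsStrictOrderedRing R] (a b : ι → R) :
    ∑ i, (a i ^ 2 + b i ^ 2) = 0 ↔ ∀ i, a i = 0 ∧ b i = 0 := by
  rw [Fintype.sum_eq_zero_iff_of_nonneg fun i => by positivity]
  simp [funext_iff, add_eq_zero_iff_of_nonneg, sq_nonneg]

section Calculus

open Asymptotics Filter Topology

variable {𝕜 E F ι : Type*} [NontriviallyNormedField 𝕜] [NormedAddCommGroup E] [NormedSpace 𝕜 E]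
  [NormedAddCommGroup F] [NormedSpace 𝕜 F] [Fintype ι] {r : ι → E → 𝕜} {p : E}

theorem hasFDerivAt_smul_of_eq_zero {c : E → 𝕜} {c' : E →L[𝕜] 𝕜} {f : E → F}
    (hc : HasFDerivAt c c' p) (hcp : c p = 0) (hf : ContinuousAt f p) :
    HasFDerivAt (fun y => c y • f y) (c'.smulRight (f p)) p := by
  have hcO : c =O[𝓝 p] fun y => y - p := by simpa [hcp] using hc.isBigO_sub
  have hfo : (fun y => f y - f p) =o[𝓝 p] fun _ => (1 : ℝ) :=
    (isLittleO_one_iff ℝ).2 (tendsto_sub_nhds_zero_iff.2 hf)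
  have hvariation : (fun y => c y • (f y - f p)) =o[𝓝 p] fun y => y - p := by
    simpa using hcO.norm_right.smul_isLittleO hfo
  have hconst : HasFDerivAt (fun y => c y • f p) (c'.smulRight (f p)) p := hc.smul_const (f p)
  refine .of_isLittleO ((hvariation.add hconst.isLittleO).congr_left fun y => ?_)
  simp only [hcp, smul_sub]
  module

theorem hasFDerivAt_sum_sq {r' : ι → E →L[𝕜] 𝕜} (hr : ∀ i, HasFDerivAt (r i) (r' i) p) :
    HasFDerivAt (fun y => ∑ i, r i y ^ 2) ((2 : 𝕜) • ∑ i, r i p • r' i) p := by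
  simpa [Finset.smul_sum, mul_smul] using HasFDerivAt.fun_sum fun i _ => (hr i).pow 2

theorem hasFDerivAt_fderiv_sum_sq (hr : ∀ i, ContDiffAt 𝕜 1 (r i) p) (hp : ∀ i, r i p = 0) :
    HasFDerivAt (fderiv 𝕜 fun y => ∑ i, r i y ^ 2)
      ((2 : 𝕜) • ∑ i, (fderiv 𝕜 (r i) p).smulRight (fderiv 𝕜 (r i) p)) p := by
  have hnear : ∀ᶠ y in 𝓝 p, ∀ i, DifferentiableAt 𝕜 (r i) y :=
    eventually_all.2 fun i => ((hr i).eventually (by simp)).mono fun _ hy =>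
      hy.differentiableAt one_ne_zero
  have hfderiv : (fderiv 𝕜 fun y => ∑ i, r i y ^ 2) =ᶠ[𝓝 p]
      fun y => (2 : 𝕜) • ∑ i, r i y • fderiv 𝕜 (r i) y :=
    hnear.mono fun _ hy => (hasFDerivAt_sum_sq fun i => (hy i).hasFDerivAt).fderiv
  have hterm (i : ι) : HasFDerivAt (fun y => r i y • fderiv 𝕜 (r i) y)
      ((fderiv 𝕜 (r i) p).smulRight (fderiv 𝕜 (r i) p)) p :=
    hasFDerivAt_smul_of_eq_zero ((hr i).differentiableAt one_ne_zero).hasFDerivAt (hp i)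
      ((hr i).continuousAt_fderiv one_ne_zero)
  exact ((HasFDerivAt.fun_sum fun i _ => hterm i).const_smul (2 : 𝕜)).congr_of_eventuallyEq hfderiv

end Calculus

section LeviForm

variable {E ι : Type*} [NormedAddCommGroup E] [NormedSpace ℝ E] [Fintype ι] {r : ι → E → ℝ} {p : E}

/-- The quadratic form `X ↦ XᵀDX` of the Hessian `D` of `f` at `p`; it is meaningful only where
`fderiv ℝ f` is differentiable. -/
noncomputable def hessianForm (f : E → ℝ) (p : E) : QuadraticForm ℝ E :=
  LinearMap.BilinMap.toQuadraticMap (fderiv ℝ (fderiv ℝ f) p).toBilinForm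

/-- The quadratic form `X ↦ XᵀDX + (JX)ᵀD(JX)`, with `D` the Hessian of `ρ` at `p`. It is the Levi
form of `ρ` with respect to an almost complex structure with value `J` at a critical point `p`;
elsewhere the Levi form also involves the first derivatives of `ρ` and of the structure. -/
noncomputable def leviForm (J : E →ₗ[ℝ] E) (ρ : E → ℝ) (p : E) : QuadraticForm ℝ E :=
  hessianForm ρ p + (hessianForm ρ p).comp J

theorem hessianForm_sum_sq (hr : ∀ i, ContDiffAt ℝ 1 (r i) p) (hp : ∀ i, r i p = 0) (X : E) :
    hessianForm (fun y => ∑ i, r i y ^ 2) p X = 2 * ∑ i, fderiv ℝ (r i) p X ^ 2 := by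
  rw [hessianForm, (hasFDerivAt_fderiv_sum_sq hr hp).fderiv]
  simp [sq]

theorem leviForm_sum_sq (hr : ∀ i, ContDiffAt ℝ 1 (r i) p) (hp : ∀ i, r i p = 0)
    (J : E →ₗ[ℝ] E) (X : E) :
    leviForm J (fun y => ∑ i, r i y ^ 2) p X =
      2 * ∑ i, (fderiv ℝ (r i) p X ^ 2 + fderiv ℝ (r i) p (J X) ^ 2) := by
  rw [leviForm, _root_.add_apply, QuadraticMap.comp_apply, hessianForm_sum_sq hr hp,
    hessianForm_sum_sq hr hp, Finset.sum_add_distrib, mul_add]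

theorem posDef_leviForm_sum_sq_iff (hr : ∀ i, ContDiffAt ℝ 1 (r i) p) (hp : ∀ i, r i p = 0)
    (J : E →ₗ[ℝ] E) :
    (leviForm J (fun y => ∑ i, r i y ^ 2) p).PosDef ↔
      ∀ X, (∀ i, fderiv ℝ (r i) p X = 0 ∧ fderiv ℝ (r i) p (J X) = 0) → X = 0 := by
  have hnonneg (X : E) : 0 ≤ leviForm J (fun y => ∑ i, r i y ^ 2) p X := by
    rw [leviForm_sum_sq hr hp]
    positivity
  have hzero (X : E) : leviForm J (fun y => ∑ i, r i y ^ 2) p X = 0 ↔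
      ∀ i, fderiv ℝ (r i) p X = 0 ∧ fderiv ℝ (r i) p (J X) = 0 := by
    rw [leviForm_sum_sq hr hp, mul_eq_zero_iff_left two_ne_zero, sum_sq_add_sq_eq_zero_iff]
  simp only [QuadraticMap.PosDef, (hnonneg _).lt_iff_ne', ne_eq, hzero, not_imp_not]

theorem stmt16_general (hr : ∀ i, ContDiffAt ℝ 1 (r i) p) (hp : ∀ i, r i p = 0)
    (J : E →ₗ[ℝ] E) :
    fderiv ℝ (fun y => ∑ i, r i y ^ 2) p = 0 ∧
      (∀ X, leviForm J (fun y => ∑ i, r i y ^ 2) p X =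
        2 * ∑ i, (fderiv ℝ (r i) p X ^ 2 + fderiv ℝ (r i) p (J X) ^ 2)) ∧
      ((leviForm J (fun y => ∑ i, r i y ^ 2) p).PosDef ↔
        ∀ X, (∀ i, fderiv ℝ (r i) p X = 0 ∧ fderiv ℝ (r i) p (J X) = 0) → X = 0) := by
  refine ⟨?_, leviForm_sum_sq hr hp J, posDef_leviForm_sum_sq_iff hr hp J⟩
  have hgrad := hasFDerivAt_sum_sq fun i => ((hr i).differentiableAt one_ne_zero).hasFDerivAt
  simpa only [hp, zero_smul, Finset.sum_const_zero, smul_zero] using hgrad.fderiv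

end LeviForm

/-- Let `r₁, …, rₙ : ℝ^{2n} → ℝ` be C² with `rᵢ(p) = 0`, and let `J` be
a real `2n×2n` matrix with `J² = −I` such that the only `X` with `d(rᵢ)ₚ(X) = 0` and
`d(rᵢ)ₚ(JX) = 0` for all `i` is `X = 0` (the submanifold `{r₁ = ⋯ = rₙ = 0}` is maximal
totally real). Then, for `ρ = Σ rᵢ²`: (a) `∇ρ(p) = 0`; (b) the Hessian `D` of `ρ` at `p`
satisfies `XᵀDX + (JX)ᵀD(JX) = 2·Σᵢ [(d(rᵢ)ₚ(X))² + (d(rᵢ)ₚ(JX))²]`; and (c) the quadratic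
form `X ↦ XᵀDX + (JX)ᵀD(JX)` (the Levi form of `ρ` at `p`) is positive definite. -/
theorem stmt16 {n : ℕ} (hn : 1 ≤ n) (r : Fin n → ((Fin n ⊕ Fin n) → ℝ) → ℝ)
    (hreg : ∀ i, ContDiff ℝ 2 (r i)) (p : (Fin n ⊕ Fin n) → ℝ) (hp : ∀ i, r i p = 0)
    (J : Matrix (Fin n ⊕ Fin n) (Fin n ⊕ Fin n) ℝ) (hJ : J * J = -1)
    (htotreal : ∀ X : (Fin n ⊕ Fin n) → ℝ,
      (∀ i, fderiv ℝ (r i) p X = 0 ∧ fderiv ℝ (r i) p (J.mulVec X) = 0) → X = 0) :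
    fderiv ℝ (fun y => ∑ i, r i y ^ 2) p = 0 ∧
      (∀ X : (Fin n ⊕ Fin n) → ℝ,
        fderiv ℝ (fderiv ℝ (fun y => ∑ i, r i y ^ 2)) p X X
            + fderiv ℝ (fderiv ℝ (fun y => ∑ i, r i y ^ 2)) p (J.mulVec X) (J.mulVec X)
          = 2 * ∑ i, ((fderiv ℝ (r i) p X) ^ 2 + (fderiv ℝ (r i) p (J.mulVec X)) ^ 2)) ∧
      (∀ X : (Fin n ⊕ Fin n) → ℝ, X ≠ 0 →
        0 < fderiv ℝ (fderiv ℝ (fun y => ∑ i, r i y ^ 2)) p X X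
            + fderiv ℝ (fderiv ℝ (fun y => ∑ i, r i y ^ 2)) p (J.mulVec X) (J.mulVec X)) := by
  obtain ⟨hgrad, hlevi, hpos⟩ :=
    stmt16_general (fun i => ((hreg i).of_le one_le_two).contDiffAt) hp J.mulVecLin
  exact ⟨hgrad, hlevi, hpos.2 htotreal⟩
end
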